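/- Let Γ* be a symmetric d×d real matrix with zero diagonal that is strictly conditionally negative definite, and suppose Q* ∈ 𝒬 satisfies Γ(Q*) = Γ*. Then Q* is the unique maximizer over 𝒬 of the surrogate log-likelihood ℓ(Q; Γ*) = (1/2) log τ(Q) − (1/2)⟨Γ*, Q⟩, and the maximum value equals −(d−1)/2 − (1/2) log det(CM(Γ*)). -/

import Mathlib

open Matrix Finset

/-- `Θ(Q)`: `Θ(Q)_{ij} = −Q_{ij}` for `i ≠ j` and `Θ(Q)_{ii} = ∑_{j≠i} Q_{ij}`. -/
noncomputable def thetaOf {d : ℕ} (Q : Matrix (Fin d) (Fin d) ℝ) :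
    Matrix (Fin d) (Fin d) ℝ :=
  Matrix.of fun i j => if i = j then ∑ l ∈ univ.filter (fun l => l ≠ i), Q i l else -Q i j

/-- Membership in `𝒬`: symmetric, zero diagonal, and `xᵀΘ(Q)x > 0` for every nonzero
`x` with `∑ᵢ xᵢ = 0`. -/
def memQ {d : ℕ} (Q : Matrix (Fin d) (Fin d) ℝ) : Prop :=
  Q.IsSymm ∧ (∀ i, Q i i = 0) ∧
    ∀ x : Fin d → ℝ, x ≠ 0 → (∑ i, x i) = 0 → 0 < x ⬝ᵥ (thetaOf Q).mulVec x

/-- The centering matrix `P = I − (1/d)𝟙𝟙ᵀ`. -/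
noncomputable def Pmat (d : ℕ) : Matrix (Fin d) (Fin d) ℝ :=
  1 - ((d : ℝ)⁻¹) • Matrix.of (fun _ _ : Fin d => (1 : ℝ))

/-- `S` is the matrix `Σ(Q)`: the unique symmetric matrix with `Σ(Q)𝟙 = 0` and
`Θ(Q)Σ(Q) = P`. -/
def isSigmaOf {d : ℕ} (Q S : Matrix (Fin d) (Fin d) ℝ) : Prop :=
  S.IsSymm ∧ S.mulVec (fun _ => 1) = 0 ∧ thetaOf Q * S = Pmat d

/-- The variogram associated with `Σ`: `Γ_{ij} = Σ_{ii} + Σ_{jj} − 2Σ_{ij}`. -/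
noncomputable def gammaOf {d : ℕ} (S : Matrix (Fin d) (Fin d) ℝ) :
    Matrix (Fin d) (Fin d) ℝ :=
  Matrix.of fun i j => S i i + S j j - 2 * S i j

/-- The inner product `⟨A, B⟩ = ∑_{i<j} A_{ij} B_{ij}` on symmetric matrices with
zero diagonal. -/
noncomputable def sinner {d : ℕ} (A B : Matrix (Fin d) (Fin d) ℝ) : ℝ :=
  ∑ p ∈ univ.filter (fun p : Fin d × Fin d => p.1 < p.2), A p.1 p.2 * B p.1 p.2

open Classical in
/-- The spanning tree polynomial `τ(Q) = ∑_T ∏_{{i,j}∈T} Q_{ij}`, summed over all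
spanning trees of the complete graph on `{1, …, d}`. -/
noncomputable def tau {d : ℕ} (Q : Matrix (Fin d) (Fin d) ℝ) : ℝ :=
  ∑ T ∈ (univ : Finset (SimpleGraph (Fin d))).filter (fun T => T.IsTree),
    ∏ p ∈ univ.filter (fun p : Fin d × Fin d => p.1 < p.2 ∧ T.Adj p.1 p.2), Q p.1 p.2

/-- The Cayley–Menger matrix of `Γ`. -/
noncomputable def CM {d : ℕ} (Γ : Matrix (Fin d) (Fin d) ℝ) :
    Matrix (Fin (d + 1)) (Fin (d + 1)) ℝ :=
  Matrix.of fun a b =>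
    if ha : (a : ℕ) < d then
      (if hb : (b : ℕ) < d then -Γ ⟨a, ha⟩ ⟨b, hb⟩ / 2 else 1)
    else (if (b : ℕ) < d then -1 else 0)

/-- Membership in the cone `𝒞^d` of symmetric matrices with zero diagonal that are
strictly conditionally negative definite. -/
def memC {d : ℕ} (Γ : Matrix (Fin d) (Fin d) ℝ) : Prop :=
  Γ.IsSymm ∧ (∀ i, Γ i i = 0) ∧
    ∀ x : Fin d → ℝ, x ≠ 0 → (∑ i, x i) = 0 → x ⬝ᵥ Γ.mulVec x < 0

/-!
Write `J = 𝟙𝟙ᵀ`. The matrix `B(Q) = Θ(Q) + J / d` is positive definite for `Q ∈ 𝒬`. By the matrix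
tree theorem `det B(Q) = d τ(Q)`, and `⟨Γ*, Q⟩ = tr (Θ(Q) Σ*) = tr (B(Q) B(Q*)⁻¹) - 1`, because
`B(Q*)⁻¹ = Σ* + J / d`. Hence `ℓ(Q; Γ*)` is, up to a constant, half of
`log det B(Q) - tr (B(Q) B(Q*)⁻¹)`. The inequality `log det M ≤ tr M - d`, strict unless `M = 1`,
shows that this is maximal exactly at `B(Q) = B(Q*)`.

Adding multiples of the border to the Cayley-Menger matrix replaces `-Γ* / 2` by `Σ* + J / d`. A
Schur complement then gives `det CM(Γ*) = det (B(Q*)⁻¹) · 𝟙ᵀ B(Q*) 𝟙 = 1 / τ(Q*)`.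
-/

section Arborescence

variable {V : Type*} {r : V}

/-- For a parent function `f` on the vertices other than the root `r`, `IsParent f a b` says that
`b` has parent `a`. The root has no parent. -/
def IsParent (f : {v // v ≠ r} → V) (a b : V) : Prop :=
  ∃ h : b ≠ r, f ⟨b, h⟩ = a

/-- A parent function describes an arborescence (a spanning tree directed towards the root `r`)
when iterating it from any vertex ends at `r`. On a vertex other than `r` the iteration can always
be continued, so this is well-foundedness of the parent relation. -/
def IsArborescence (f : {v // v ≠ r} → V) : Prop :=
  WellFounded (IsParent f)

/-- The undirected graph joining each vertex to its parent. -/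
def parentGraph (f : {v // v ≠ r} → V) : SimpleGraph V :=
  SimpleGraph.fromRel (IsParent f)

variable {f g : {v // v ≠ r} → V}

lemma isParent_apply (f : {v // v ≠ r} → V) (u : {v // v ≠ r}) : IsParent f (f u) u :=
  ⟨u.2, rfl⟩

lemma acc_isParent_root (f : {v // v ≠ r} → V) : Acc (IsParent f) r :=
  ⟨r, fun _ h => (h.1 rfl).elim⟩

lemma acc_isParent_apply_iff (u : {v // v ≠ r}) :
    Acc (IsParent f) (f u) ↔ Acc (IsParent f) u := by
  refine ⟨fun h => ⟨_, ?_⟩, fun h => h.inv (isParent_apply f u)⟩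
  rintro _ ⟨_, rfl⟩
  exact h

lemma parentGraph_adj_iff (hf : IsArborescence f) {a b : V} :
    (parentGraph f).Adj a b ↔ IsParent f a b ∨ IsParent f b a := by
  refine ⟨And.right, fun h => ⟨?_, h⟩⟩
  rintro rfl
  exact hf.irrefl.irrefl a (or_self_iff.1 h)

lemma parentGraph_adj_apply (hf : IsArborescence f) (u : {v // v ≠ r}) :
    (parentGraph f).Adj u (f u) :=
  (parentGraph_adj_iff hf).2 <| .inr <| isParent_apply f u

lemma edgeSet_parentGraph (hf : IsArborescence f) :
    (parentGraph f).edgeSet = Set.range fun u : {v // v ≠ r} => s(↑u, f u) := by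
  ext e
  induction e with | h a b
  rw [SimpleGraph.mem_edgeSet, parentGraph_adj_iff hf]
  constructor
  · rintro (⟨hb, h⟩ | ⟨ha, h⟩)
    · exact ⟨⟨b, hb⟩, h ▸ Sym2.eq_swap⟩
    · exact ⟨⟨a, ha⟩, h ▸ rfl⟩
  · rintro ⟨u, hu⟩
    rcases Sym2.eq_iff.1 hu with ⟨rfl, rfl⟩ | ⟨rfl, rfl⟩
    · exact .inr (isParent_apply f u)
    · exact .inl (isParent_apply f u)

lemma parentEdge_injective (hf : IsArborescence f) :
    Function.Injective fun u : {v // v ≠ r} => s(↑u, f u) := by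
  intro u v huv
  rcases Sym2.eq_iff.1 huv with ⟨h, -⟩ | ⟨hu, hv⟩
  · exact Subtype.ext h
  · exact (hf.asymmetric _ _ ⟨u.2, hv⟩ ⟨v.2, hu.symm⟩).elim

lemma parentGraph_connected (hf : IsArborescence f) : (parentGraph f).Connected := by
  have reachable_root (v : V) : (parentGraph f).Reachable v r := by
    induction v using hf.induction with | h v ih
    by_cases hv : v = r
    · rw [hv]
    · exact (parentGraph_adj_apply hf ⟨v, hv⟩).reachable.trans (ih _ (isParent_apply f _))
  have : Nonempty V := ⟨r⟩
  exact ⟨fun a b => (reachable_root a).trans (reachable_root b).symm⟩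

lemma parentGraph_isTree [Finite V] (hf : IsArborescence f) : (parentGraph f).IsTree := by
  rw [SimpleGraph.isTree_iff_connected_and_card, edgeSet_parentGraph hf,
    Nat.card_range_of_injective (parentEdge_injective hf)]
  refine ⟨parentGraph_connected hf, ?_⟩
  have := Fintype.ofFinite V
  classical
  simp [Nat.sub_add_cancel (Fintype.card_pos_iff.2 ⟨r⟩)]

lemma parentGraph_injOn :
    Set.InjOn parentGraph {f : {v // v ≠ r} → V | IsArborescence f} := by
  intro f hf g hg hfg
  suffices ∀ v (hv : v ≠ r), f ⟨v, hv⟩ = g ⟨v, hv⟩ from funext fun u => this u u.2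
  intro v
  induction v using hf.induction with | h v ih
  intro hv
  have hadj : (parentGraph g).Adj v (f ⟨v, hv⟩) := hfg ▸ parentGraph_adj_apply hf ⟨v, hv⟩
  rcases (parentGraph_adj_iff hg).1 hadj with ⟨hne, hgv⟩ | ⟨_, hgv⟩
  · -- If `v` were the `g`-parent of `f v`, it would also be its `f`-parent by induction.
    have hpar : IsParent f v (f ⟨v, hv⟩) :=
      ⟨hne, (ih _ (isParent_apply f ⟨v, hv⟩) hne).trans hgv⟩
    exact (hf.asymmetric _ _ hpar (isParent_apply f ⟨v, hv⟩)).elim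
  · exact hgv.symm

lemma exists_adj_dist_lt {G : SimpleGraph V} (hG : G.Connected) {v w : V} (h : v ≠ w) :
    ∃ u, G.Adj v u ∧ G.dist u w < G.dist v w := by
  obtain ⟨p, hp⟩ := hG.exists_walk_length_eq_dist v w
  cases p with
  | nil => exact (h rfl).elim
  | cons hadj q => exact ⟨_, hadj, by grind [SimpleGraph.dist_le q, SimpleGraph.Walk.length_cons]⟩

lemma exists_parentGraph_eq {T : SimpleGraph V} (hT : T.IsTree) (r : V) :
    ∃ f : {v // v ≠ r} → V, IsArborescence f ∧ parentGraph f = T := by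
  choose f hadj hdist using fun u : {v // v ≠ r} => exists_adj_dist_lt hT.1 u.2
  have hf : IsArborescence f := by
    refine (measure fun v => T.dist v r).wf.mono ?_
    rintro _ b ⟨hb, rfl⟩
    exact hdist ⟨b, hb⟩
  have hle : parentGraph f ≤ T := by
    intro a b hab
    rcases (parentGraph_adj_iff hf).1 hab with ⟨h, rfl⟩ | ⟨h, rfl⟩
    · exact (hadj ⟨b, h⟩).symm
    · exact hadj ⟨a, h⟩
  exact ⟨f, hf, hle.antisymm <|
    (SimpleGraph.isTree_iff_minimal_connected.1 hT).2 (parentGraph_connected hf) hle⟩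

variable [Fintype V] [DecidableEq V]

open Classical in
lemma prod_edgeFinset_parentGraph {M : Type*} [CommMonoid M] (hf : IsArborescence f)
    (w : Sym2 V → M) :
    ∏ e ∈ (parentGraph f).edgeFinset, w e = ∏ u : {v // v ≠ r}, w s(↑u, f u) := by
  have hedge : (parentGraph f).edgeFinset = univ.image fun u : {v // v ≠ r} => s(↑u, f u) := by
    rw [← Finset.coe_inj, SimpleGraph.coe_edgeFinset, edgeSet_parentGraph hf]
    simp
  rw [hedge, prod_image (parentEdge_injective hf).injOn]

open Classical in
lemma sum_isTree_eq_sum_isArborescence {R : Type*} [CommSemiring R] (r : V) (w : Sym2 V → R) :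
    ∑ T : SimpleGraph V with T.IsTree, ∏ e ∈ T.edgeFinset, w e =
      ∑ f : {v // v ≠ r} → V with IsArborescence f, ∏ u : {v // v ≠ r}, w s(↑u, f u) := by
  symm
  refine sum_bij (fun f _ => parentGraph f) (fun f hf => ?_) (fun f hf g hg h => ?_)
    (fun T hT => ?_) (fun f hf => ?_)
  · simpa using parentGraph_isTree (mem_filter_univ f |>.1 hf)
  · exact parentGraph_injOn (mem_filter_univ f |>.1 hf) (mem_filter_univ g |>.1 hg) h
  · obtain ⟨f, hf, rfl⟩ := exists_parentGraph_eq (mem_filter_univ T |>.1 hT) r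
    exact ⟨f, by simpa using hf, rfl⟩
  · exact (prod_edgeFinset_parentGraph (mem_filter_univ f |>.1 hf) w).symm

end Arborescence

section MatrixTree

variable {V R : Type*} [DecidableEq V] [CommRing R] {r : V}

/-- The reduced incidence vector `e_a - e_b` of the edge from `a` to `b`, where the coordinate of
the root `r` is deleted. -/
def reducedEdgeVector (R : Type*) [CommRing R] (r a b : V) : {v // v ≠ r} → R :=
  fun v => (if a = v then 1 else 0) - if b = v then 1 else 0

/-- The reduced incidence matrix of the edges from each vertex to its parent. -/
def parentMatrix (R : Type*) [CommRing R] (f : {v // v ≠ r} → V) :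
    Matrix {v // v ≠ r} {v // v ≠ r} R :=
  Matrix.of fun u => reducedEdgeVector R r u (f u)

lemma parentMatrix_apply (f : {v // v ≠ r} → V) (u v : {v // v ≠ r}) :
    parentMatrix R f u v = (if u = v then 1 else 0) - if f u = v then 1 else 0 := by
  simp [parentMatrix, reducedEdgeVector, Subtype.ext_iff]

lemma det_eq_one_of_unitriangular {m α : Type*} [Fintype m] [DecidableEq m] [LinearOrder α]
    {M : Matrix m m R} (b : m → α) (hdiag : ∀ i, M i i = 1)
    (hM : ∀ i j, i ≠ j → b j ≤ b i → M i j = 0) : M.det = 1 := by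
  have htri : M.BlockTriangular b := fun i j hij => hM i j (by grind) hij.le
  rw [htri.det]
  refine prod_eq_one fun k _ => ?_
  suffices M.toSquareBlock b k = 1 by rw [this, det_one]
  ext ⟨i, hi⟩ ⟨j, hj⟩
  rcases eq_or_ne i j with rfl | hij
  · simp [toSquareBlock_def, hdiag]
  · simp [toSquareBlock_def, hij, hM i j hij (hj.trans hi.symm).le]

lemma det_eq_zero_of_mulVec_eq_zero_of_apply_eq_one {m : Type*} [Fintype m] [DecidableEq m]
    {M : Matrix m m R} {x : m → R} (hMx : M *ᵥ x = 0) {i : m} (hi : x i = 1) : M.det = 0 := by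
  have hdet : M.det • x = 0 := by
    rw [← one_mulVec x, ← smul_mulVec, ← adjugate_mul, ← mulVec_mulVec, hMx, mulVec_zero]
  simpa [hi] using congrFun hdet i

variable [Fintype V]

lemma det_parentMatrix_of_isArborescence {f : {v // v ≠ r} → V} (hf : IsArborescence f) :
    (parentMatrix R f).det = 1 := by
  have : IsWellFounded V (IsParent f) := ⟨hf⟩
  have hrank (u : {v // v ≠ r}) :
      IsWellFounded.rank (IsParent f) (f u) < IsWellFounded.rank (IsParent f) u :=
    IsWellFounded.rank_lt_of_rel (isParent_apply f u)
  refine det_eq_one_of_unitriangular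
    (fun u => OrderDual.toDual (IsWellFounded.rank (IsParent f) u)) (fun u => ?_)
    (fun u v huv hle => ?_)
  · have hne : f u ≠ u := fun h => (hrank u).ne (by rw [h])
    simp [parentMatrix_apply, hne]
  · have hne : f u ≠ v := fun h => (hrank u).not_ge (h ▸ hle)
    simp [parentMatrix_apply, hne, huv]

open Classical in
lemma det_parentMatrix_of_not_isArborescence {f : {v // v ≠ r} → V} (hf : ¬ IsArborescence f) :
    (parentMatrix R f).det = 0 := by
  obtain ⟨v, hv⟩ : ∃ v, ¬ Acc (IsParent f) v := by
    by_contra! h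
    exact hf ⟨h⟩
  have hvr : v ≠ r := by
    rintro rfl
    exact hv (acc_isParent_root f)
  -- A vertex never reaches the root iff its parent never does, so the indicator vector of these
  -- vertices is in the kernel.
  refine det_eq_zero_of_mulVec_eq_zero_of_apply_eq_one (i := ⟨v, hvr⟩)
    (x := fun u => if Acc (IsParent f) u then 0 else 1) ?_ (if_neg hv)
  ext u
  simp only [mulVec, dotProduct, parentMatrix_apply, sub_mul, sum_sub_distrib,
    ite_mul, one_mul, zero_mul, sum_ite_eq, mem_univ, if_true, Pi.zero_apply]
  rw [← acc_isParent_apply_iff, sub_eq_zero]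
  by_cases hu : f u = r
  · simp only [hu, acc_isParent_root, if_true]
    refine (sum_eq_zero fun w _ => if_neg w.2.symm).symm
  · rw [sum_eq_single ⟨f u, hu⟩ (fun w _ hw => if_neg fun h => hw (Subtype.ext h.symm)) (by simp)]
    simp

/-- The Laplacian of the complete graph on `V` with edge weights `Q`. The diagonal of `Q` is
irrelevant, as it cancels. -/
def weightedLaplacian (Q : Matrix V V R) : Matrix V V R :=
  diagonal (Q *ᵥ 1) - Q

lemma weightedLaplacian_apply (Q : Matrix V V R) (i j : V) :
    weightedLaplacian Q i j = (if i = j then ∑ k, Q i k else 0) - Q i j := by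
  simp [weightedLaplacian, diagonal_apply, mulVec, dotProduct]

/-- The reduced Laplacian: row and column of the root `r` are deleted. -/
abbrev reducedLaplacian (Q : Matrix V V R) (r : V) : Matrix {v // v ≠ r} {v // v ≠ r} R :=
  (weightedLaplacian Q).submatrix (↑) (↑)

lemma reducedLaplacian_row (Q : Matrix V V R) (u : {v // v ≠ r}) :
    reducedLaplacian Q r u = ∑ b, Q u b • reducedEdgeVector R r u b := by
  ext v
  simp only [submatrix_apply, weightedLaplacian_apply, reducedEdgeVector, Finset.sum_apply,
    Pi.smul_apply, smul_eq_mul, mul_sub, sum_sub_distrib, mul_ite, mul_one, mul_zero,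
    sum_ite_eq', mem_univ, if_true]
  split_ifs <;> simp

open Classical in
/-- Tutte's directed matrix tree theorem. -/
theorem det_reducedLaplacian (Q : Matrix V V R) (r : V) :
    (reducedLaplacian Q r).det =
      ∑ f : {v // v ≠ r} → V with IsArborescence f, ∏ u : {v // v ≠ r}, Q u (f u) := by
  have hexpand : (reducedLaplacian Q r).det =
      ∑ f : {v // v ≠ r} → V, (∏ u : {v // v ≠ r}, Q u (f u)) * (parentMatrix R f).det := by
    have hmulti := detRowAlternating.toMultilinearMap.map_sum
      fun (u : {v // v ≠ r}) b => Q u b • reducedEdgeVector R r u b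
    simp_rw [← reducedLaplacian_row, MultilinearMap.map_smul_univ] at hmulti
    exact hmulti
  rw [hexpand, sum_filter]
  refine sum_congr rfl fun f _ => ?_
  split_ifs with hf
  · rw [det_parentMatrix_of_isArborescence hf, mul_one]
  · rw [det_parentMatrix_of_not_isArborescence hf, mul_zero]

open Classical in
/-- Kirchhoff's weighted matrix tree theorem. -/
theorem det_reducedLaplacian_eq_sum_isTree (w : Sym2 V → R) (r : V) :
    (reducedLaplacian (Matrix.of fun i j => w s(i, j)) r).det =
      ∑ T : SimpleGraph V with T.IsTree, ∏ e ∈ T.edgeFinset, w e := by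
  rw [sum_isTree_eq_sum_isArborescence r]
  exact det_reducedLaplacian _ r

end MatrixTree

section LogDet

variable {n : Type*} [Fintype n] [DecidableEq n] {A B M : Matrix n n ℝ}

lemma log_det_eq_sum_log_eigenvalues (hM : M.PosDef) :
    Real.log M.det = ∑ i, Real.log (hM.1.eigenvalues i) := by
  rw [hM.1.det_eq_prod_eigenvalues, ← Real.log_prod fun i _ => (hM.eigenvalues_pos i).ne']
  simp

lemma trace_sub_card_eq_sum_eigenvalues_sub_one (hM : M.IsHermitian) :
    M.trace - Fintype.card n = ∑ i, (hM.eigenvalues i - 1) := by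
  simp [hM.trace_eq_sum_eigenvalues]

lemma log_det_le_trace_sub_card (hM : M.PosDef) :
    Real.log M.det ≤ M.trace - Fintype.card n := by
  rw [log_det_eq_sum_log_eigenvalues hM, trace_sub_card_eq_sum_eigenvalues_sub_one hM.1]
  exact sum_le_sum fun i _ => Real.log_le_sub_one_of_pos (hM.eigenvalues_pos i)

lemma eq_one_of_eigenvalues_eq_one (hM : M.IsHermitian) (h : hM.eigenvalues = 1) : M = 1 := by
  rw [hM.spectral_theorem, h]
  simp

lemma eq_one_of_log_det_eq_trace_sub_card (hM : M.PosDef)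
    (h : Real.log M.det = M.trace - Fintype.card n) : M = 1 := by
  rw [log_det_eq_sum_log_eigenvalues hM, trace_sub_card_eq_sum_eigenvalues_sub_one hM.1,
    sum_eq_sum_iff_of_le fun i _ => Real.log_le_sub_one_of_pos (hM.eigenvalues_pos i)] at h
  refine eq_one_of_eigenvalues_eq_one hM.1 (funext fun i => ?_)
  by_contra hne
  exact (Real.log_lt_sub_one_of_pos (hM.eigenvalues_pos i) hne).ne (h i (mem_univ i))

open scoped MatrixOrder Matrix.Norms.L2Operator in
-- Writing `B⁻¹ = star C * C`, the matrix `C * A * star C` replaces `A * B⁻¹`, which need not be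
-- symmetric.
lemma exists_posDef_det_trace_eq (hA : A.PosDef) (hB : B.PosDef) :
    ∃ M : Matrix n n ℝ, M.PosDef ∧ M.det = A.det / B.det ∧ M.trace = (A * B⁻¹).trace ∧
      (M = 1 → A = B) := by
  obtain ⟨C, hCunit, hC⟩ := 
    CStarAlgebra.isStrictlyPositive_iff_eq_star_mul_self.1 hB.inv.isStrictlyPositive
  refine ⟨C * A * star C, (IsUnit.posDef_star_right_conjugate_iff hCunit).2 hA, ?_, ?_, fun h => ?_⟩
  · rw [div_eq_mul_inv, ← Ring.inverse_eq_inv', ← det_nonsing_inv, hC, det_mul, det_mul, det_mul]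
    ring
  · rw [hC, trace_mul_comm (C * A), ← mul_assoc, trace_mul_comm]
  · rw [mul_assoc, mul_eq_one_comm, mul_assoc, ← hC] at h
    exact Matrix.inv_inj (inv_eq_right_inv h) hA.det_pos.ne'.isUnit

lemma log_det_sub_trace_mul_inv_le (hA : A.PosDef) (hB : B.PosDef) :
    Real.log A.det - (A * B⁻¹).trace ≤ Real.log B.det - Fintype.card n := by
  obtain ⟨M, hM, hdet, htrace, -⟩ := exists_posDef_det_trace_eq hA hB
  have hle := log_det_le_trace_sub_card hM
  rw [hdet, htrace, Real.log_div hA.det_pos.ne' hB.det_pos.ne'] at hle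
  linarith

lemma eq_of_log_det_sub_trace_mul_inv_eq (hA : A.PosDef) (hB : B.PosDef)
    (h : Real.log A.det - (A * B⁻¹).trace = Real.log B.det - Fintype.card n) : A = B := by
  obtain ⟨M, hM, hdet, htrace, hone⟩ := exists_posDef_det_trace_eq hA hB
  refine hone (eq_one_of_log_det_eq_trace_sub_card hM ?_)
  rw [hdet, htrace, Real.log_div hA.det_pos.ne' hB.det_pos.ne']
  linarith

end LogDet

section OnesMatrix

/-- The all-ones matrix `𝟙𝟙ᵀ`, allowed to be rectangular. -/
def onesMatrix (R m n : Type*) [One R] : Matrix m n R :=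
  Matrix.of fun _ _ => 1

@[simp]
lemma onesMatrix_apply {R m n : Type*} [One R] (i : m) (j : n) : onesMatrix R m n i j = 1 :=
  rfl

@[simp]
lemma transpose_onesMatrix (R m n : Type*) [One R] : (onesMatrix R m n)ᵀ = onesMatrix R n m :=
  rfl

variable {V R : Type*} [Fintype V] [DecidableEq V] [CommRing R]

lemma det_fromBlocks_one_onesMatrix {m n : Type*} [Fintype m] [DecidableEq m]
    [Unique n] [DecidableEq n] :
    (fromBlocks 1 (onesMatrix R m n) (-onesMatrix R n m) 1).det = Fintype.card m + 1 := by
  rw [det_fromBlocks_one₁₁, det_unique]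
  simp [mul_apply, add_comm]

lemma sum_ne_apply_eq_neg {M : Matrix V V R} (hM : M *ᵥ 1 = 0) (r i : V) :
    ∑ j : {v // v ≠ r}, M i j = -M i r := by
  have hrow : ∑ j, M i j = 0 := by simpa [mulVec, dotProduct] using congrFun hM i
  rw [Fintype.sum_eq_add_sum_subtype_ne _ r] at hrow
  exact eq_neg_of_add_eq_zero_right hrow

/-- The root `r` is split off from `V` as the second summand. -/
def splitRoot (r : V) : {v // v ≠ r} ⊕ Unit ≃ V :=
  (Equiv.optionEquivSumPUnit _).symm.trans (Equiv.optionSubtypeNe r)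

lemma submatrix_splitRoot_eq {M : Matrix V V R} (hrow : M *ᵥ 1 = 0) (hcol : Mᵀ *ᵥ 1 = 0)
    (t : R) (r : V) :
    (M + t • onesMatrix R V V).submatrix (splitRoot r) (splitRoot r) =
      fromBlocks 1 (onesMatrix R {v // v ≠ r} Unit) (-onesMatrix R Unit {v // v ≠ r}) 1 *
        fromBlocks (M.submatrix (↑) (↑)) 0 0 (t • onesMatrix R Unit Unit) *
        (fromBlocks 1 (onesMatrix R {v // v ≠ r} Unit) (-onesMatrix R Unit {v // v ≠ r}) 1)ᵀ := by
  have hcol' (j : V) : ∑ i : {v // v ≠ r}, M i j = -M r j := sum_ne_apply_eq_neg hcol r j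
  rw [fromBlocks_transpose, fromBlocks_multiply, fromBlocks_multiply]
  ext (i | i) (j | j) <;>
    simp [splitRoot, mul_apply, sum_ne_apply_eq_neg hrow, hcol', add_comm]

lemma det_add_smul_onesMatrix {M : Matrix V V R} (hrow : M *ᵥ 1 = 0) (hcol : Mᵀ *ᵥ 1 = 0)
    (t : R) (r : V) :
    (M + t • onesMatrix R V V).det =
      Fintype.card V ^ 2 * t *
        (M.submatrix (↑) (↑) : Matrix {v // v ≠ r} {v // v ≠ r} R).det := by
  have hcard : (Fintype.card {v // v ≠ r} : R) + 1 = Fintype.card V := by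
    rw [Fintype.card_congr (splitRoot r).symm]
    simp
  rw [← det_submatrix_equiv_self (splitRoot r), submatrix_splitRoot_eq hrow hcol, det_mul, det_mul,
    det_transpose, det_fromBlocks_one_onesMatrix, hcard, det_fromBlocks_zero₁₂,
    det_unique (n := Unit), Matrix.smul_apply, onesMatrix_apply, smul_eq_mul]
  ring

end OnesMatrix

section AddMeanProj

variable {V K : Type*} [Fintype V] [Field K]

/-- `M + (1/|V|) 𝟙𝟙ᵀ`. The added term is the orthogonal projection onto the constant vectors, so
this turns a matrix acting on the zero-sum vectors into one acting on the whole space. -/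
def addMeanProj (M : Matrix V V K) : Matrix V V K :=
  M + (Fintype.card V : K)⁻¹ • onesMatrix K V V

lemma addMeanProj_injective : Function.Injective (addMeanProj : Matrix V V K → Matrix V V K) :=
  fun _ _ h => add_right_cancel h

lemma addMeanProj_mul {M N : Matrix V V K} (hM : M *ᵥ 1 = 0) (hN : Nᵀ *ᵥ 1 = 0) :
    addMeanProj M * addMeanProj N = addMeanProj (M * N) := by
  have hMJ : M * onesMatrix K V V = 0 := by
    ext i j
    simpa [mul_apply, mulVec, dotProduct] using congrFun hM i
  have hJN : onesMatrix K V V * N = 0 := by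
    ext i j
    simpa [mul_apply, mulVec, dotProduct] using congrFun hN j
  have hJJ : onesMatrix K V V * onesMatrix K V V = (Fintype.card V : K) • onesMatrix K V V := by
    ext i j
    simp [mul_apply]
  have hcard : (Fintype.card V : K)⁻¹ * (Fintype.card V : K)⁻¹ * Fintype.card V =
      (Fintype.card V : K)⁻¹ := by
    simpa using mul_self_mul_inv (Fintype.card V : K)⁻¹
  simp [addMeanProj, add_mul, mul_add, hMJ, hJN, hJJ, smul_smul, ← mul_assoc, hcard]

lemma addMeanProj_mulVec_one [Nonempty V] [CharZero K] {M : Matrix V V K} (hM : M *ᵥ 1 = 0) :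
    addMeanProj M *ᵥ 1 = 1 := by
  rw [addMeanProj, add_mulVec, hM, smul_mulVec]
  ext i
  simp [mulVec, dotProduct]

lemma trace_addMeanProj [Nonempty V] [CharZero K] (M : Matrix V V K) :
    (addMeanProj M).trace = M.trace + 1 := by
  simp [addMeanProj, trace, sum_add_distrib]

lemma det_addMeanProj [DecidableEq V] [CharZero K] {M : Matrix V V K} (hrow : M *ᵥ 1 = 0)
    (hcol : Mᵀ *ᵥ 1 = 0) (r : V) :
    (addMeanProj M).det =
      Fintype.card V * (M.submatrix (↑) (↑) : Matrix {v // v ≠ r} {v // v ≠ r} K).det := by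
  have : Nonempty V := ⟨r⟩
  rw [addMeanProj, det_add_smul_onesMatrix hrow hcol _ r]
  field_simp

lemma dotProduct_addMeanProj_mulVec (M : Matrix V V K) (x : V → K) :
    x ⬝ᵥ addMeanProj M *ᵥ x = x ⬝ᵥ M *ᵥ x + (Fintype.card V : K)⁻¹ * (∑ i, x i) ^ 2 := by
  have hJx : onesMatrix K V V *ᵥ x = fun _ => ∑ i, x i := by
    ext i
    simp [mulVec, dotProduct]
  rw [addMeanProj, add_mulVec, smul_mulVec, hJx, dotProduct_add, dotProduct_smul, smul_eq_mul, sq]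
  simp [dotProduct, sum_mul]

lemma dotProduct_mulVec_sub_const {M : Matrix V V K} (hM : M.IsSymm) (hrow : M *ᵥ 1 = 0)
    (x : V → K) (c : K) : (x - c • 1) ⬝ᵥ M *ᵥ (x - c • 1) = x ⬝ᵥ M *ᵥ x := by
  have hcol : 1 ⬝ᵥ M *ᵥ x = 0 := by
    rw [dotProduct_mulVec, ← mulVec_transpose, hM, hrow, zero_dotProduct]
  simp only [mulVec_sub, mulVec_smul, hrow, smul_zero, sub_zero, sub_dotProduct, smul_dotProduct,
    hcol]

lemma posDef_addMeanProj {M : Matrix V V ℝ} (hM : M.IsSymm) (hrow : M *ᵥ 1 = 0)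
    (hpos : ∀ x : V → ℝ, x ≠ 0 → ∑ i, x i = 0 → 0 < x ⬝ᵥ M *ᵥ x) :
    (addMeanProj M).PosDef := by
  have hsymm : (addMeanProj M).IsHermitian := by
    rw [IsHermitian, conjTranspose_eq_transpose_of_trivial, addMeanProj, transpose_add, hM,
      transpose_smul, transpose_onesMatrix]
  refine PosDef.of_dotProduct_mulVec_pos hsymm fun x hx => ?_
  rw [star_trivial, dotProduct_addMeanProj_mulVec]
  have : Nonempty V := not_isEmpty_iff.1 fun _ => hx (Subsingleton.elim _ _)
  set c := (Fintype.card V : ℝ)⁻¹ * ∑ i, x i with hc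
  rw [← dotProduct_mulVec_sub_const hM hrow x c]
  rcases eq_or_ne (x - c • 1) 0 with hconst | hconst
  · have hsum : ∑ i, x i ≠ 0 := by
      rintro h
      simp [hc, h, hx] at hconst
    rw [hconst, zero_dotProduct, zero_add]
    positivity
  · have hcentered : ∑ i, (x - c • 1) i = 0 := by simp [hc]
    have := hpos _ hconst hcentered
    positivity

end AddMeanProj

section BorderedMatrix

variable {V R : Type*} [Fintype V] [DecidableEq V] [CommRing R]

/-- The matrix `A` bordered by a column `𝟙`, a row `-𝟙ᵀ` and a corner entry `0`. -/
def borderedMatrix (A : Matrix V V R) : Matrix (V ⊕ Unit) (V ⊕ Unit) R :=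
  fromBlocks A (onesMatrix R V Unit) (-onesMatrix R Unit V) 0

lemma det_borderedMatrix_of_mul_eq_one {A B : Matrix V V R} (hAB : A * B = 1) :
    (borderedMatrix A).det = A.det * (1 ⬝ᵥ B *ᵥ 1) := by
  let := invertibleOfRightInverse A B hAB
  rw [borderedMatrix, det_fromBlocks₁₁, det_unique (n := Unit), invOf_eq_right_inv hAB,
    Matrix.neg_mul, Matrix.neg_mul, zero_sub, neg_neg, Matrix.mul_assoc]
  simp [mul_apply, mulVec, dotProduct]

lemma det_borderedMatrix_add (A : Matrix V V R) (u v : V → R) :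
    (borderedMatrix (A + Matrix.of fun i j => u i + v j)).det = (borderedMatrix A).det := by
  have hfactor : borderedMatrix (A + Matrix.of fun i j => u i + v j) =
      fromBlocks 1 (replicateCol Unit (-u)) 0 1 * borderedMatrix A *
        fromBlocks 1 0 (replicateRow Unit v) 1 := by
    rw [borderedMatrix, borderedMatrix, fromBlocks_multiply, fromBlocks_multiply]
    ext (i | i) (j | j) <;> simp [mul_apply, add_assoc]
  rw [hfactor, det_mul, det_mul, det_fromBlocks_zero₂₁, det_fromBlocks_zero₁₂]
  simp

end BorderedMatrix

section OrderedPairs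

variable {V : Type*} [Fintype V] [LinearOrder V]

lemma sum_lt_add_swap {M : Type*} [AddCommMonoid M] {F : V → V → M} (hF : ∀ i, F i i = 0) :
    ∑ p : V × V with p.1 < p.2, (F p.1 p.2 + F p.2 p.1) = ∑ i, ∑ j, F i j := by
  have hswap : ∑ p : V × V with p.1 < p.2, F p.2 p.1 = ∑ p : V × V with p.2 < p.1, F p.1 p.2 :=
    sum_equiv (Equiv.prodComm V V) (by simp) (by simp)
  rw [sum_add_distrib, hswap, sum_filter, sum_filter, ← sum_add_distrib, ← Fintype.sum_prod_type']
  refine sum_congr rfl fun p _ => ?_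
  rcases lt_trichotomy p.1 p.2 with h | h | h
  · simp [h, h.not_gt]
  · simp [h, hF]
  · simp [h, h.not_gt]

open Classical in
lemma prod_lt_adj_eq_prod_edgeFinset {M : Type*} [CommMonoid M] (G : SimpleGraph V)
    (w : Sym2 V → M) :
    ∏ p : V × V with p.1 < p.2 ∧ G.Adj p.1 p.2, w s(p.1, p.2) = ∏ e ∈ G.edgeFinset, w e := by
  refine prod_nbij (fun p => s(p.1, p.2)) (fun p hp => ?_) (fun p hp q hq hpq => ?_)
    (fun e he => ?_) (fun _ _ => rfl)
  · simpa using (mem_filter_univ p |>.1 hp).2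
  · have hp := (mem_filter_univ p |>.1 hp).1
    have hq := (mem_filter_univ q |>.1 hq).1
    rcases Sym2.eq_iff.1 hpq with ⟨h₁, h₂⟩ | ⟨h₁, h₂⟩
    · exact Prod.ext h₁ h₂
    · exact absurd hq (h₁ ▸ h₂ ▸ hp.not_gt)
  · induction e with | h a b
    have hab : G.Adj a b := by simpa using he
    rcases hab.ne.lt_or_gt with h | h
    · exact ⟨(a, b), by simp [h, hab], rfl⟩
    · exact ⟨(b, a), by simp [h, hab.symm], Sym2.eq_swap⟩

end OrderedPairs

section SurrogateLikelihood

variable {d : ℕ} {Q S : Matrix (Fin d) (Fin d) ℝ}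

lemma thetaOf_eq_weightedLaplacian (Q : Matrix (Fin d) (Fin d) ℝ) :
    thetaOf Q = weightedLaplacian Q := by
  ext i j
  rw [weightedLaplacian_apply, thetaOf, of_apply, filter_ne', sum_erase_eq_sub (mem_univ i)]
  split_ifs with h
  · rw [h]
  · rw [zero_sub]

lemma thetaOf_injOn : Set.InjOn thetaOf {Q : Matrix (Fin d) (Fin d) ℝ | ∀ i, Q i i = 0} := by
  intro Q hQ Q' hQ' h
  ext i j
  rcases eq_or_ne i j with rfl | hij
  · rw [hQ, hQ']
  · simpa [thetaOf, hij] using congrFun₂ h i j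

lemma thetaOf_mulVec_one (Q : Matrix (Fin d) (Fin d) ℝ) : thetaOf Q *ᵥ 1 = 0 := by
  ext i
  simp [thetaOf_eq_weightedLaplacian, weightedLaplacian, sub_mulVec, mulVec_diagonal]

lemma thetaOf_isSymm (hQ : Q.IsSymm) : (thetaOf Q).IsSymm := by
  rw [thetaOf_eq_weightedLaplacian]
  exact (isSymm_diagonal _).sub hQ

lemma addMeanProj_Pmat (d : ℕ) : addMeanProj (Pmat d) = 1 := by
  rw [addMeanProj, Fintype.card_fin]
  exact sub_add_cancel _ _

lemma det_reducedLaplacian_eq_tau (hQ : Q.IsSymm) (r : Fin d) :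
    (reducedLaplacian Q r).det = tau Q := by
  let w : Sym2 (Fin d) → ℝ := Sym2.lift ⟨Q, fun i j => hQ.apply j i⟩
  rw [show Q = Matrix.of fun i j => w s(i, j) from rfl, det_reducedLaplacian_eq_sum_isTree]
  exact sum_congr rfl fun T _ => (prod_lt_adj_eq_prod_edgeFinset T w).symm

lemma det_addMeanProj_thetaOf [NeZero d] (hQ : Q.IsSymm) :
    (addMeanProj (thetaOf Q)).det = d * tau Q := by
  rw [det_addMeanProj (thetaOf_mulVec_one Q) (by rw [thetaOf_isSymm hQ, thetaOf_mulVec_one]) 0,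
    thetaOf_eq_weightedLaplacian, det_reducedLaplacian_eq_tau hQ, Fintype.card_fin]

lemma posDef_addMeanProj_thetaOf (hQ : memQ Q) : (addMeanProj (thetaOf Q)).PosDef :=
  posDef_addMeanProj (thetaOf_isSymm hQ.1) (thetaOf_mulVec_one Q) hQ.2.2

lemma log_tau [NeZero d] (hQ : memQ Q) :
    Real.log (tau Q) = Real.log (addMeanProj (thetaOf Q)).det - Real.log d := by
  have hdet := (posDef_addMeanProj_thetaOf hQ).det_pos.ne'
  rw [← Real.log_div hdet (NeZero.ne _), det_addMeanProj_thetaOf hQ.1,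
    mul_div_cancel_left₀ _ (NeZero.ne _)]

lemma addMeanProj_thetaOf_mul_addMeanProj (hS : isSigmaOf Q S) :
    addMeanProj (thetaOf Q) * addMeanProj S = 1 := by
  rw [addMeanProj_mul (thetaOf_mulVec_one Q) (hS.1.symm ▸ hS.2.1), hS.2.2, addMeanProj_Pmat]

lemma sinner_gammaOf (hQ : Q.IsSymm) (hS : S.IsSymm) :
    sinner (gammaOf S) Q = (thetaOf Q * S).trace := by
  have htrace : (thetaOf Q * S).trace = ∑ i, ∑ j, Q i j * (S i i - S i j) := by
    simp_rw [thetaOf_eq_weightedLaplacian, weightedLaplacian, sub_mul, trace_sub, trace, diag_apply,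
      diagonal_mul, mul_apply, mulVec, dotProduct, Pi.one_apply, mul_one, sum_mul, mul_sub,
      sum_sub_distrib, hS.apply]
  rw [htrace, ← sum_lt_add_swap (by simp), sinner]
  refine sum_congr rfl fun p _ => ?_
  rw [hQ.apply p.1 p.2, hS.apply p.1 p.2, gammaOf, of_apply]
  ring

lemma sinner_gammaOf_eq_trace [NeZero d] (hQ : Q.IsSymm) (hS : S.IsSymm) (hS1 : S *ᵥ 1 = 0) :
    sinner (gammaOf S) Q = (addMeanProj (thetaOf Q) * addMeanProj S).trace - 1 := by
  rw [addMeanProj_mul (thetaOf_mulVec_one Q) (by rw [hS, hS1]), trace_addMeanProj,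
    sinner_gammaOf hQ hS, add_sub_cancel_right]

lemma sinner_gammaOf_self [NeZero d] (hQ : Q.IsSymm) (hS : isSigmaOf Q S) :
    sinner (gammaOf S) Q = d - 1 := by
  rw [sinner_gammaOf_eq_trace hQ hS.1 hS.2.1, addMeanProj_thetaOf_mul_addMeanProj hS, trace_one,
    Fintype.card_fin]

lemma det_CM (Γ : Matrix (Fin d) (Fin d) ℝ) :
    (CM Γ).det = (borderedMatrix (Matrix.of fun i j => -Γ i j / 2)).det := by
  let e := (Equiv.optionEquivSumPUnit (Fin d)).symm.trans finSuccEquivLast.symm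
  rw [← det_submatrix_equiv_self e]
  congr 1
  ext (i | i) (j | j) <;> simp [e, CM, borderedMatrix]

lemma det_CM_gammaOf (S : Matrix (Fin d) (Fin d) ℝ) :
    (CM (gammaOf S)).det = (borderedMatrix S).det := by
  rw [det_CM, ← det_borderedMatrix_add S (fun i => -S i i / 2) (fun j => -S j j / 2)]
  congr 2
  ext i j
  rw [of_apply, gammaOf, of_apply, Matrix.add_apply, of_apply]
  ring

lemma det_CM_gammaOf_of_isSigmaOf [NeZero d] (hQ : Q.IsSymm) (hS : isSigmaOf Q S) :
    (CM (gammaOf S)).det = (tau Q)⁻¹ := by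
  have hinv := addMeanProj_thetaOf_mul_addMeanProj hS
  have hdet : d * tau Q * (addMeanProj S).det = 1 := by
    rw [← det_addMeanProj_thetaOf hQ, ← det_mul, hinv, det_one]
  have hborder : (borderedMatrix S).det = (addMeanProj S).det * d := by
    rw [← det_borderedMatrix_add S (fun _ => (d : ℝ)⁻¹) 0]
    have hadd : S + Matrix.of (fun _ j => (d : ℝ)⁻¹ + (0 : Fin d → ℝ) j) = addMeanProj S := by
      ext i j
      simp [addMeanProj]
    rw [hadd, det_borderedMatrix_of_mul_eq_one (mul_eq_one_comm.1 hinv),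
      addMeanProj_mulVec_one (thetaOf_mulVec_one Q)]
    simp
  rw [det_CM_gammaOf, hborder]
  exact eq_inv_of_mul_eq_one_left (by linarith)

lemma log_tau_sub_sinner_gammaOf [NeZero d] {Q' : Matrix (Fin d) (Fin d) ℝ} (hQ : memQ Q)
    (hS : isSigmaOf Q' S) :
    Real.log (tau Q) - sinner (gammaOf S) Q =
      Real.log (addMeanProj (thetaOf Q)).det -
        (addMeanProj (thetaOf Q) * (addMeanProj (thetaOf Q'))⁻¹).trace + (1 - Real.log d) := by
  rw [log_tau hQ, sinner_gammaOf_eq_trace hQ.1 hS.1 hS.2.1,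
    inv_eq_right_inv (addMeanProj_thetaOf_mul_addMeanProj hS)]
  ring

end SurrogateLikelihood

/-- If `Γ(Q*) = Γ*`, then `Q*` is the unique maximizer over `𝒬` of the surrogate
log-likelihood `ℓ(Q; Γ*) = (1/2) log τ(Q) − (1/2)⟨Γ*, Q⟩`, and the maximum value is
`−(d−1)/2 − (1/2) log det(CM(Γ*))`. -/
theorem surrogate_mle_unconstrained {d : ℕ} (hd : 0 < d)
    (Γs Qs S : Matrix (Fin d) (Fin d) ℝ)
    (hΓsym : Γs.IsSymm) (hΓdiag : ∀ i, Γs i i = 0)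
    (hΓscnd : ∀ x : Fin d → ℝ, x ≠ 0 → (∑ i, x i) = 0 → x ⬝ᵥ Γs.mulVec x < 0)
    (hQs : memQ Qs) (hS : isSigmaOf Qs S) (hΓQs : gammaOf S = Γs) :
    (∀ Q, memQ Q →
        (1 / 2) * Real.log (tau Q) - (1 / 2) * sinner Γs Q ≤
          (1 / 2) * Real.log (tau Qs) - (1 / 2) * sinner Γs Qs) ∧
    (∀ Q, memQ Q →
        (1 / 2) * Real.log (tau Q) - (1 / 2) * sinner Γs Q =
          (1 / 2) * Real.log (tau Qs) - (1 / 2) * sinner Γs Qs → Q = Qs) ∧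
    (1 / 2) * Real.log (tau Qs) - (1 / 2) * sinner Γs Qs =
      -((d : ℝ) - 1) / 2 - (1 / 2) * Real.log ((CM Γs).det) := by
  subst hΓQs
  have : NeZero d := ⟨hd.ne'⟩
  have hlik {Q} (hQ : memQ Q) := log_tau_sub_sinner_gammaOf hQ hS
  have hlik_Qs : Real.log (tau Qs) - sinner (gammaOf S) Qs =
      Real.log (addMeanProj (thetaOf Qs)).det - Fintype.card (Fin d) + (1 - Real.log d) := by
    rw [log_tau hQs, sinner_gammaOf_self hQs.1 hS, Fintype.card_fin]
    ring
  have hposs := posDef_addMeanProj_thetaOf hQs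
  refine ⟨fun Q hQ => ?_, fun Q hQ h => ?_, ?_⟩
  · have hle := log_det_sub_trace_mul_inv_le (posDef_addMeanProj_thetaOf hQ) hposs
    linarith [hlik hQ]
  · refine thetaOf_injOn hQ.2.1 hQs.2.1 (addMeanProj_injective ?_)
    refine eq_of_log_det_sub_trace_mul_inv_eq (posDef_addMeanProj_thetaOf hQ) hposs ?_
    linarith [hlik hQ]
  · rw [det_CM_gammaOf_of_isSigmaOf hQs.1 hS, Real.log_inv, sinner_gammaOf_self hQs.1 hS]
    ring
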